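/- With Λ' as above, assume in addition that ⟨d₁,d₁⟩ is odd. Then there exists a root δ ∈ Λ' (i.e. ⟨δ,δ⟩ = −2) with ⟨δ_K,δ_K⟩ = −1 and ⟨δ_E,δ_E⟩ = −1. -/

import Mathlib

/-!
STATEMENT 6: With `Λ'` as in the context and `⟨d₁,d₁⟩` odd, there exists a
root `δ ∈ Λ'` (i.e. `⟨δ,δ⟩ = -2`) with `⟨δ_K,δ_K⟩ = -1` and `⟨δ_E,δ_E⟩ = -1`.
-/

noncomputable section
namespace Stmt6

/-- The bilinear form of K = U(2) ⊕ U(2) on ℚ⁴ (ℚ-bilinear extension):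
Gram matrix has blocks [[0,2],[2,0]] and [[0,2],[2,0]]. -/
def bK (x y : Fin 4 → ℚ) : ℚ :=
  2 * (x 0 * y 1 + x 1 * y 0) + 2 * (x 2 * y 3 + x 3 * y 2)

/-- The bilinear form of E = E8(2) on ℚ⁸ (ℚ-bilinear extension):
Gram matrix is −2 times the E8 Cartan matrix. -/
def bE (x y : Fin 8 → ℚ) : ℚ :=
  ∑ i : Fin 8, ∑ j : Fin 8, x i * ((-2 * CartanMatrix.E₈ i j : ℤ) : ℚ) * y j

/-- `x` lies in the lattice ℤ⁴ ⊂ ℚ⁴. -/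
def isInt4 (x : Fin 4 → ℚ) : Prop := ∀ i, ∃ n : ℤ, x i = n

/-- `x` lies in the lattice ℤ⁸ ⊂ ℚ⁸. -/
def isInt8 (x : Fin 8 → ℚ) : Prop := ∀ i, ∃ n : ℤ, x i = n

/-- `x` lies in the dual lattice (1/2)ℤ⁴ ⊂ ℚ⁴ of K. -/
def isHalf4 (x : Fin 4 → ℚ) : Prop := ∀ i, ∃ n : ℤ, x i = n / 2

/-- `x` lies in the dual lattice (1/2)ℤ⁸ ⊂ ℚ⁸ of E. -/
def isHalf8 (x : Fin 8 → ℚ) : Prop := ∀ i, ∃ n : ℤ, x i = n / 2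

/-- The ambient space ℚ⁴ ⊕ ℚ⁸ of K ⊕ E. -/
abbrev V : Type := (Fin 4 → ℚ) × (Fin 8 → ℚ)

/-- The orthogonal direct sum form of K ⊕ E on ℚ⁴ ⊕ ℚ⁸. -/
def bV (x y : V) : ℚ := bK x.1 y.1 + bE x.2 y.2

/-- Membership in the lattice Λ' = ℤ·(d₁,d₂) + (ℤ⁴ ⊕ ℤ⁸) ⊂ ℚ⁴ ⊕ ℚ⁸. -/
def memL (d₁ : Fin 4 → ℚ) (d₂ : Fin 8 → ℚ) (x : V) : Prop :=
  ∃ n : ℤ, isInt4 (x.1 - (n : ℚ) • d₁) ∧ isInt8 (x.2 - (n : ℚ) • d₂)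

/-!
Let `L` be the positive definite `E8` lattice, so that `v / 2` has norm `-⟨v, v⟩ / 2` in `E8(2)`. On
the `E` side we need the classical fact that a class of `L / 2L` whose norm is `2` modulo `4`
contains a vector of norm `2`. The norm modulo `4` and the property of containing such a vector are
invariant under the affine Weyl group `W ⋉ 2L`, so it suffices to look at the fundamental alcove,
whose only lattice points are `0` and the fundamental weights `ω₁`, `ω₈`, of norms `0`, `4` and `2`.
A vector is moved into the alcove by reflecting in the walls that separate it from a fixed interior
point: each reflection brings it closer, and the squared distances are bounded below and discrete.

On the `K` side, an odd `u₀ u₁ + u₂ u₃` has exactly one odd summand. Modulo `2` its factors can be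
replaced by `1` and `-1`, and those of the other summand by a pair with product `0`.
-/

section AffineReflection

open LinearMap (BilinForm)

variable {R M : Type*} [CommRing R] [AddCommGroup M] [Module R M]

/-- The reflection of `w` in the affine hyperplane `{x | B r x = m}`. It is normalized for a vector
`r` with `B r r = 2`; for `m` even it then lies in the affine Weyl group at level two. -/
def affineReflection (B : BilinForm R M) (r : M) (m : R) (w : M) : M :=
  w - (B r w - m) • r

/-- The class of `v` modulo `2M` contains a vector of norm `2`. -/
def IsCongruentToRoot (B : BilinForm R M) (v : M) : Prop :=
  ∃ z : M, B (v + (2 : R) • z) (v + (2 : R) • z) = 2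

variable {B : BilinForm R M} {r : M}

theorem apply_smul_affineReflection_sub_self (hB : B.IsSymm) (hr : B r r = 2) (n m : R) (p w : M) :
    B (n • affineReflection B r m w - p) (n • affineReflection B r m w - p) =
      B (n • w - p) (n • w - p) - 2 * n * (B r w - m) * (n * m - B r p) := by
  simp only [affineReflection, map_sub, map_smul, LinearMap.sub_apply, LinearMap.smul_apply,
    smul_eq_mul, hr, hB.eq w r, hB.eq p r]
  ring

theorem apply_affineReflection_self (hB : B.IsSymm) (hr : B r r = 2) (m : R) (w : M) :
    B (affineReflection B r m w) (affineReflection B r m w) =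
      B w w - 2 * m * (B r w - m) := by
  simpa [mul_right_comm] using apply_smul_affineReflection_sub_self hB hr 1 m 0 w

theorem IsCongruentToRoot.of_affineReflection (hB : B.IsSymm) (hr : B r r = 2) {m : R}
    (hm : Even m) {w : M} (h : IsCongruentToRoot B (affineReflection B r m w)) :
    IsCongruentToRoot B w := by
  obtain ⟨z, hz⟩ := h
  obtain ⟨k, rfl⟩ := hm
  set y := affineReflection B r (k + k) w + (2 : R) • z with hy
  have hwy : w + (2 : R) • (z - (k + B r z) • r) = affineReflection B r 0 y := by
    simp only [hy, affineReflection, map_add, map_sub, map_smul, smul_eq_mul, hr]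
    module
  refine ⟨z - (k + B r z) • r, ?_⟩
  rw [hwy, apply_affineReflection_self hB hr, hz]
  ring

end AffineReflection

section Alcove

open LinearMap (BilinForm)

variable {M : Type*} [AddCommGroup M] {B : BilinForm ℤ M} {r : M}

theorem apply_affineReflection_self_modEq (hB : B.IsSymm) (hr : B r r = 2) {m : ℤ} (hm : Even m)
    (w : M) :
    B (affineReflection B r m w) (affineReflection B r m w) ≡ B w w [ZMOD 4] := by
  obtain ⟨k, rfl⟩ := hm
  rw [apply_affineReflection_self hB hr]
  exact Int.modEq_iff_dvd.mpr ⟨k * (B r w - (k + k)), by ring⟩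

theorem apply_smul_affineReflection_sub_self_lt (hB : B.IsSymm) (hr : B r r = 2) {n m : ℤ} {p w : M}
    (hn : 0 < n) (hp : n * m < B r p) (hw : B r w < m) :
    B (n • affineReflection B r m w - p) (n • affineReflection B r m w - p) <
      B (n • w - p) (n • w - p) := by
  have : 0 < n * ((m - B r w) * (B r p - n * m)) :=
    mul_pos hn (mul_pos (sub_pos.mpr hw) (sub_pos.mpr hp))
  rw [apply_smul_affineReflection_sub_self hB hr]
  linarith

/-- The interior point `p / n` is represented by the integral data `n` and `p`. -/
theorem alcove_induction {ι : Type*} {α : ι → M} {m : ι → ℤ} (hB : B.IsPosSemidef)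
    (hα : ∀ i, B (α i) (α i) = 2) {n : ℤ} (hn : 0 < n) {p : M}
    (hp : ∀ i, n * m i < B (α i) p) {P : M → Prop}
    (alcove : ∀ w, (∀ i, m i ≤ B (α i) w) → P w)
    (reflect : ∀ i w, P (affineReflection B (α i) (m i) w) → P w) (w : M) : P w := by
  induction h : (B (n • w - p) (n • w - p)).toNat using Nat.strong_induction_on generalizing w with
  | _ N ih =>
    by_cases hw : ∀ i, m i ≤ B (α i) w
    · exact alcove w hw
    · push Not at hw
      obtain ⟨i, hi⟩ := hw
      have closer := apply_smul_affineReflection_sub_self_lt hB.isSymm (hα i) hn (hp i) hi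
      have nonneg := hB.isNonneg.nonneg (n • affineReflection B (α i) (m i) w - p)
      exact reflect i w (ih _ (by omega) _ rfl)

theorem isCongruentToRoot_of_alcove {ι : Type*} {α : ι → M} {m : ι → ℤ} (hB : B.IsPosSemidef)
    (hα : ∀ i, B (α i) (α i) = 2) (hm : ∀ i, Even (m i)) {n : ℤ} (hn : 0 < n) {p : M}
    (hp : ∀ i, n * m i < B (α i) p)
    (alcove : ∀ w, (∀ i, m i ≤ B (α i) w) → B w w ≡ 2 [ZMOD 4] → B w w = 2)
    {v : M} (hv : B v v ≡ 2 [ZMOD 4]) : IsCongruentToRoot B v := by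
  induction v using alcove_induction hB hα hn hp with
  | alcove w hw => exact ⟨0, by simpa using alcove w hw hv⟩
  | reflect i w ih =>
    have norm_modEq := apply_affineReflection_self_modEq hB.isSymm (hα i) (hm i) w
    exact (ih (norm_modEq.trans hv)).of_affineReflection hB.isSymm (hα i) (hm i)

end Alcove

section E8

open scoped Matrix

/-- The positive definite `E8` form on `ℤ⁸`, in the basis of simple roots. -/
def e8Form : LinearMap.BilinForm ℤ (Fin 8 → ℤ) := Matrix.toBilin' CartanMatrix.E₈

/-- The highest root of `E8`, in Bourbaki's numbering of the simple roots. -/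
def highestRoot : Fin 8 → ℤ := ![2, 3, 4, 6, 5, 4, 3, 2]

/-- The half sum `ρ` of the positive roots of `E8`, characterized by pairing to `1` with each simple
root. The point `ρ / 15` is interior to the alcove because `ρ` pairs to `29 < 30` with the highest
root. -/
def weylVector : Fin 8 → ℤ := ![46, 68, 91, 135, 110, 84, 57, 29]

/-- The inward normals of the walls of the fundamental alcove of `E8`: the simple roots, and the
negative of the highest root, indexed by `none`. -/
def wallNormal : Option (Fin 8) → Fin 8 → ℤ
  | none => -highestRoot
  | some i => Pi.single i 1

/-- The levels of the walls of the fundamental alcove for translations in `2L`: a vector `w` lies in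
the alcove when `wallLevel i ≤ ⟨wallNormal i, w⟩` for all `i`. -/
def wallLevel : Option (Fin 8) → ℤ
  | none => -2
  | some _ => 0

theorem e8Form_apply (x y : Fin 8 → ℤ) : e8Form x y = x ⬝ᵥ (CartanMatrix.E₈ *ᵥ y) :=
  Matrix.toBilin'_apply' _ _ _

theorem cartanMatrix_E₈_mulVec (w : Fin 8 → ℤ) :
    CartanMatrix.E₈ *ᵥ w =
      ![2 * w 0 - w 2, 2 * w 1 - w 3, 2 * w 2 - w 0 - w 3, 2 * w 3 - w 1 - w 2 - w 4,
        2 * w 4 - w 3 - w 5, 2 * w 5 - w 4 - w 6, 2 * w 6 - w 5 - w 7, 2 * w 7 - w 6] := by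
  ext i
  fin_cases i <;> simp [CartanMatrix.E₈, Matrix.mulVec, dotProduct, Fin.sum_univ_eight] <;> ring

theorem e8Form_isSymm : e8Form.IsSymm :=
  ⟨fun x y => by
    rw [e8Form_apply, e8Form_apply, Matrix.dotProduct_mulVec, ← Matrix.mulVec_transpose,
      CartanMatrix.E₈_transpose, dotProduct_comm]⟩

theorem e8Form_nonneg (x : Fin 8 → ℤ) : 0 ≤ e8Form x x := by
  -- Complete squares from the ends of the three arms of the Dynkin diagram towards the branch node.
  have sum_of_squares : 60 * e8Form x x =
      30 * (2 * x 0 - x 2) ^ 2 + 10 * (3 * x 2 - 2 * x 3) ^ 2 + 30 * (2 * x 1 - x 3) ^ 2 +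
      30 * (2 * x 7 - x 6) ^ 2 + 10 * (3 * x 6 - 2 * x 5) ^ 2 + 5 * (4 * x 5 - 3 * x 4) ^ 2 +
      3 * (5 * x 4 - 4 * x 3) ^ 2 + 2 * x 3 ^ 2 := by
    simp only [e8Form_apply, cartanMatrix_E₈_mulVec, dotProduct, Fin.sum_univ_eight,
      Matrix.cons_val]
    ring
  have : 0 ≤ 60 * e8Form x x := by rw [sum_of_squares]; positivity
  linarith

theorem e8Form_isPosSemidef : e8Form.IsPosSemidef :=
  LinearMap.BilinForm.isPosSemidef_def.mpr ⟨e8Form_isSymm, ⟨e8Form_nonneg⟩⟩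

theorem e8Form_single_left (i : Fin 8) (w : Fin 8 → ℤ) :
    e8Form (Pi.single i 1) w = (CartanMatrix.E₈ *ᵥ w) i := by
  rw [e8Form_apply, single_one_dotProduct]

theorem e8Form_highestRoot_left (w : Fin 8 → ℤ) : e8Form highestRoot w = w 7 := by
  simp only [e8Form_apply, cartanMatrix_E₈_mulVec, highestRoot, dotProduct, Fin.sum_univ_eight,
    Matrix.cons_val]
  ring

theorem e8Form_wallNormal_self (i : Option (Fin 8)) :
    e8Form (wallNormal i) (wallNormal i) = 2 := by
  cases i with
  | none =>
    rw [wallNormal, LinearMap.BilinForm.neg_left, LinearMap.BilinForm.neg_right, neg_neg,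
      e8Form_highestRoot_left]
    rfl
  | some i => simp [wallNormal, e8Form_single_left]

theorem even_wallLevel (i : Option (Fin 8)) : Even (wallLevel i) := by
  cases i <;> simp [wallLevel]

theorem wallLevel_lt_e8Form_weylVector (i : Option (Fin 8)) :
    15 * wallLevel i < e8Form (wallNormal i) weylVector := by
  cases i with
  | none => simp [wallLevel, wallNormal, e8Form_highestRoot_left, weylVector]
  | some i =>
    rw [wallLevel, wallNormal, e8Form_single_left, cartanMatrix_E₈_mulVec]
    fin_cases i <;> simp [weylVector]

theorem e8Form_self_eq_two_of_alcove {w : Fin 8 → ℤ}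
    (hw : ∀ i, wallLevel i ≤ e8Form (wallNormal i) w) (hw₂ : e8Form w w ≡ 2 [ZMOD 4]) :
    e8Form w w = 2 := by
  set c := CartanMatrix.E₈ *ᵥ w with hc
  have c_nonneg (i : Fin 8) : 0 ≤ c i := by
    simpa only [wallLevel, wallNormal, e8Form_single_left] using hw (some i)
  have highestRoot_le : w 7 ≤ 2 := by
    simpa [wallLevel, wallNormal, e8Form_highestRoot_left] using hw none
  have w_zero : w 0 =
      4 * c 0 + 5 * c 1 + 7 * c 2 + 10 * c 3 + 8 * c 4 + 6 * c 5 + 4 * c 6 + 2 * c 7 := by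
    simp only [hc, cartanMatrix_E₈_mulVec, Matrix.cons_val]
    ring
  have w_seven : w 7 =
      2 * c 0 + 3 * c 1 + 4 * c 2 + 6 * c 3 + 5 * c 4 + 4 * c 5 + 3 * c 6 + 2 * c 7 := by
    simp only [hc, cartanMatrix_E₈_mulVec, Matrix.cons_val]
    ring
  obtain ⟨h1, h2, h3, h4, h5, h6⟩ :
      c 1 = 0 ∧ c 2 = 0 ∧ c 3 = 0 ∧ c 4 = 0 ∧ c 5 = 0 ∧ c 6 = 0 := by
    grind
  have norm_eq : e8Form w w = (4 * c 0 + 2 * c 7) * c 0 + (2 * c 0 + 2 * c 7) * c 7 := by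
    simp [e8Form_apply, ← hc, dotProduct, Fin.sum_univ_eight, w_zero, w_seven,
      h1, h2, h3, h4, h5, h6]
  have zero_or_fundamental_weight : c 0 = 0 ∧ c 7 = 0 ∨ c 0 = 1 ∧ c 7 = 0 ∨ c 0 = 0 ∧ c 7 = 1 := by
    have := c_nonneg 0
    have := c_nonneg 7
    omega
  rw [norm_eq] at hw₂ ⊢
  rcases zero_or_fundamental_weight with ⟨h0, h7⟩ | ⟨h0, h7⟩ | ⟨h0, h7⟩ <;>
    simp [h0, h7, Int.ModEq] at hw₂ ⊢

theorem isCongruentToRoot_e8Form {v : Fin 8 → ℤ} (hv : e8Form v v ≡ 2 [ZMOD 4]) :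
    IsCongruentToRoot e8Form v :=
  isCongruentToRoot_of_alcove e8Form_isPosSemidef e8Form_wallNormal_self even_wallLevel
    (by norm_num) wallLevel_lt_e8Form_weylVector (fun _ => e8Form_self_eq_two_of_alcove) hv

theorem bE_half (v : Fin 8 → ℤ) :
    bE (fun i => (v i : ℚ) / 2) (fun i => (v i : ℚ) / 2) = -(e8Form v v : ℚ) / 2 := by
  rw [e8Form, Matrix.toBilin'_apply, bE, neg_div, Int.cast_sum, Finset.sum_div,
    ← Finset.sum_neg_distrib]
  refine Finset.sum_congr rfl fun i _ => ?_
  rw [Int.cast_sum, Finset.sum_div, ← Finset.sum_neg_distrib]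
  refine Finset.sum_congr rfl fun j _ => ?_
  push_cast
  ring

theorem exists_bE_add_self_eq_neg_one {d : Fin 8 → ℚ} (hd : isHalf8 d)
    (hodd : ∃ m : ℤ, bE d d = 2 * m + 1) :
    ∃ z : Fin 8 → ℤ, bE (d + fun i => (z i : ℚ)) (d + fun i => (z i : ℚ)) = -1 := by
  choose v hv using hd
  obtain rfl : d = fun i => (v i : ℚ) / 2 := funext hv
  obtain ⟨m, hm⟩ := hodd
  rw [bE_half] at hm
  have norm_modEq : e8Form v v ≡ 2 [ZMOD 4] := by
    refine Int.modEq_iff_add_fac.mpr ⟨m + 1, ?_⟩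
    have : (2 : ℚ) = e8Form v v + 4 * (m + 1) := by linarith
    exact_mod_cast this
  obtain ⟨z, hz⟩ := isCongruentToRoot_e8Form norm_modEq
  have half_add : ((fun i => (v i : ℚ) / 2) + fun i => (z i : ℚ)) =
      fun i => (((v + (2 : ℤ) • z) i : ℤ) : ℚ) / 2 := by
    ext i
    simp only [Pi.add_apply, Pi.smul_apply, smul_eq_mul]
    push_cast
    ring
  refine ⟨z, ?_⟩
  rw [half_add, bE_half, hz]
  norm_num

end E8

section HyperbolicPlanes

theorem exists_mul_eq_neg_one_of_odd {R : Type*} [CommRing R] {a b : R} (ha : Odd a)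
    (hb : Odd b) : ∃ x y : R, (a + 2 * x) * (b + 2 * y) = -1 := by
  obtain ⟨k, rfl⟩ := ha
  obtain ⟨l, rfl⟩ := hb
  exact ⟨-k, -l - 1, by ring⟩

theorem exists_mul_eq_zero_of_even {R : Type*} [CommRing R] {a b : R} (h : Even a ∨ Even b) :
    ∃ x y : R, (a + 2 * x) * (b + 2 * y) = 0 := by
  obtain ⟨k, rfl⟩ | ⟨l, rfl⟩ := h
  · exact ⟨-k, 0, by ring⟩
  · exact ⟨0, -l, by ring⟩

theorem exists_mul_add_mul_eq_neg_one {a b c d : ℤ} (h : Odd (a * b + c * d)) :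
    ∃ x y z t : ℤ, (a + 2 * x) * (b + 2 * y) + (c + 2 * z) * (d + 2 * t) = -1 := by
  rcases Int.even_or_odd (c * d) with hcd | hcd
  · have hab := Int.odd_mul.mp (Int.odd_add.mp h |>.mpr hcd)
    obtain ⟨x, y, hxy⟩ := exists_mul_eq_neg_one_of_odd hab.1 hab.2
    obtain ⟨z, t, hzt⟩ := exists_mul_eq_zero_of_even (Int.even_mul.mp hcd)
    exact ⟨x, y, z, t, by rw [hxy, hzt, add_zero]⟩
  · have hab := Int.even_mul.mp (Int.odd_add'.mp h |>.mp hcd)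
    obtain ⟨x, y, hxy⟩ := exists_mul_eq_zero_of_even hab
    obtain ⟨z, t, hzt⟩ := exists_mul_eq_neg_one_of_odd (Int.odd_mul.mp hcd).1 (Int.odd_mul.mp hcd).2
    exact ⟨x, y, z, t, by rw [hxy, hzt, zero_add]⟩

theorem exists_bK_add_self_eq_neg_one {d : Fin 4 → ℚ} (hd : isHalf4 d)
    (hodd : ∃ m : ℤ, bK d d = 2 * m + 1) :
    ∃ z : Fin 4 → ℤ, bK (d + fun i => (z i : ℚ)) (d + fun i => (z i : ℚ)) = -1 := by
  choose u hu using hd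
  obtain ⟨m, hm⟩ := hodd
  have sum_odd : Odd (u 0 * u 1 + u 2 * u 3) := by
    refine ⟨m, ?_⟩
    have : (u 0 * u 1 + u 2 * u 3 : ℚ) = 2 * m + 1 := by
      rw [← hm]
      simp only [bK, hu]
      ring
    exact_mod_cast this
  obtain ⟨x, y, z, t, h⟩ := exists_mul_add_mul_eq_neg_one sum_odd
  refine ⟨![x, y, z, t], ?_⟩
  have h_rat := congrArg (Int.cast : ℤ → ℚ) h
  push_cast at h_rat
  rw [← h_rat]
  simp only [bK, Pi.add_apply, hu, Matrix.cons_val]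
  ring

end HyperbolicPlanes

theorem memL_add_intCast (d₁ : Fin 4 → ℚ) (d₂ : Fin 8 → ℚ) (z₁ : Fin 4 → ℤ) (z₂ : Fin 8 → ℤ) :
    memL d₁ d₂ (d₁ + fun i => (z₁ i : ℚ), d₂ + fun i => (z₂ i : ℚ)) :=
  ⟨1, fun i => ⟨z₁ i, by simp⟩, fun i => ⟨z₂ i, by simp⟩⟩

theorem statement6 (d₁ : Fin 4 → ℚ) (d₂ : Fin 8 → ℚ)
    (hd₁ : isHalf4 d₁) (hd₁' : ¬ isInt4 d₁)
    (hd₂ : isHalf8 d₂) (hd₂' : ¬ isInt8 d₂)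
    (heven : ∃ k : ℤ, bK d₁ d₁ + bE d₂ d₂ = 2 * k)
    (hodd : ∃ m : ℤ, bK d₁ d₁ = 2 * m + 1) :
    ∃ δ : V, memL d₁ d₂ δ ∧ bV δ δ = -2 ∧
      bK δ.1 δ.1 = -1 ∧ bE δ.2 δ.2 = -1 := by
  obtain ⟨m, hm⟩ := hodd
  obtain ⟨k, hk⟩ := heven
  have hodd₂ : ∃ l : ℤ, bE d₂ d₂ = 2 * l + 1 := ⟨k - m - 1, by push_cast; linarith⟩
  obtain ⟨z₁, hz₁⟩ := exists_bK_add_self_eq_neg_one hd₁ ⟨m, hm⟩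
  obtain ⟨z₂, hz₂⟩ := exists_bE_add_self_eq_neg_one hd₂ hodd₂
  refine ⟨(d₁ + fun i => (z₁ i : ℚ), d₂ + fun i => (z₂ i : ℚ)), memL_add_intCast d₁ d₂ z₁ z₂,
    ?_, hz₁, hz₂⟩
  rw [bV, hz₁, hz₂]
  norm_num

end Stmt6
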